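/- Let ρ : ℝ^d → ℝ be a nonnegative bounded measurable function and v : ℝ^d → ℝ^d a bounded measurable vector field, let x ∈ ℝ^d, ℓ > 0 and M > 0, and suppose ρ̄_ℓ(x) ≥ 1/M. Then the Favre stress satisfies |τ̃_ℓ(v,v)(x)| ≤ C · (δv(ℓ;x))² · [1 + M·δρ(ℓ;x) + M²·(δρ(ℓ;x))²], where C is an absolute constant (one may take C = 6) and |·| of a matrix is the Frobenius norm. -/

import Mathlib

/-!
The Favre average at `x` is an honest expectation: as `ρ ≥ 0` and `ρ̄_ℓ(x) > 0`, the function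
`r ↦ G_ℓ(r) ρ(x+r) / ρ̄_ℓ(x)` is a probability density, supported in `|r| < ℓ`. Hence the Favre
stress is the covariance matrix of the random vector `r ↦ v(x+r)` under the corresponding
probability measure (`favreStress_eq_covariance`).

By Cauchy–Schwarz, `cov(X_i, X_j)² ≤ Var X_i · Var X_j`, so the Frobenius norm of a covariance
matrix is at most its trace, and the trace is at most the mean square deviation from any fixed
vector (`frobNorm_covariance_le`). Taking that vector to be `v(x)` bounds the stress by
`δv(ℓ;x)²`. This is stronger than the claim, since the bracket is at least `1`.
-/

open MeasureTheory Metric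
open scoped RealInnerProductSpace ENNReal

noncomputable section

abbrev Euc (d : ℕ) := EuclideanSpace ℝ (Fin d)

namespace QT

variable {d : ℕ}

/-- `G` is a mollifier: smooth, nonnegative, supported in the open unit ball, integral one. -/
structure IsMollifier {d : ℕ} (G : Euc d → ℝ) : Prop where
  smooth : ContDiff ℝ (⊤ : ℕ∞) G
  nonneg : ∀ r, 0 ≤ G r
  supp : tsupport G ⊆ ball (0 : Euc d) 1
  integral_one : ∫ r, G r = 1

/-- The rescaled mollifier `G_ℓ(r) = ℓ^{-d} G(r/ℓ)`. -/
def resc (G : Euc d → ℝ) (ℓ : ℝ) (r : Euc d) : ℝ := (ℓ ^ d)⁻¹ * G (ℓ⁻¹ • r)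

/-- Coarse-grained field `ā_ℓ(x) = ∫ G_ℓ(r) a(x+r) dr`. -/
def cg {E : Type*} [NormedAddCommGroup E] [NormedSpace ℝ E]
    (G : Euc d → ℝ) (ℓ : ℝ) (a : Euc d → E) (x : Euc d) : E :=
  ∫ r, resc G ℓ r • a (x + r)

/-- Increment `δa(r;x) = a(x+r) - a(x)`. -/
def incr {E : Type*} [NormedAddCommGroup E] (a : Euc d → E) (r x : Euc d) : E :=
  a (x + r) - a x

/-- `δa(ℓ;x) = sup_{|r|<ℓ} |δa(r;x)|`. -/
def supIncr {E : Type*} [NormedAddCommGroup E] (a : Euc d → E) (ℓ : ℝ) (x : Euc d) : ℝ :=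
  ⨆ r ∈ ball (0 : Euc d) ℓ, ‖incr a r x‖

/-- Second-order coarse-graining cumulant `τ̄_ℓ(f,g)`. -/
def tau2 (G : Euc d → ℝ) (ℓ : ℝ) (f g : Euc d → ℝ) (x : Euc d) : ℝ :=
  cg G ℓ (fun y => f y * g y) x - cg G ℓ f x * cg G ℓ g x

/-- `τ̄_ℓ(ρ, v)` for a scalar density and a vector field. -/
def tauV (G : Euc d → ℝ) (ℓ : ℝ) (ρ : Euc d → ℝ) (v : Euc d → Euc d) (x : Euc d) : Euc d :=
  cg G ℓ (fun y => ρ y • v y) x - cg G ℓ ρ x • cg G ℓ v x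

/-- `i`-th standard basis vector. -/
def e (d : ℕ) (i : Fin d) : Euc d := EuclideanSpace.single i (1 : ℝ)

/-- Partial derivative `∂_i f(x)`. -/
def pd (i : Fin d) (f : Euc d → ℝ) (x : Euc d) : ℝ := fderiv ℝ f x (e d i)

/-- Laplacian. -/
def lap (f : Euc d → ℝ) (x : Euc d) : ℝ := ∑ i, pd i (fun y => pd i f y) x

/-- Gradient matrix `(∇v)_{ij} = ∂_i v_j`. -/
def gradMat (v : Euc d → Euc d) (x : Euc d) : Matrix (Fin d) (Fin d) ℝ :=
  Matrix.of fun i j => pd i (fun y => v y j) x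

/-- Frobenius norm of a matrix. -/
def frobNorm (A : Matrix (Fin d) (Fin d) ℝ) : ℝ := Real.sqrt (∑ i, ∑ j, A i j ^ 2)

/-- Frobenius inner product `A : B`. -/
def frobInner (A B : Matrix (Fin d) (Fin d) ℝ) : ℝ := ∑ i, ∑ j, A i j * B i j

/-- Favre-averaged velocity `ṽ_ℓ = \overline{(ρv)}_ℓ/ρ̄_ℓ` where `ρ̄_ℓ > 0`, `0` otherwise. -/
def favre (G : Euc d → ℝ) (ℓ : ℝ) (ρ : Euc d → ℝ) (v : Euc d → Euc d) (x : Euc d) : Euc d :=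
  if 0 < cg G ℓ ρ x then (cg G ℓ ρ x)⁻¹ • cg G ℓ (fun y => ρ y • v y) x else 0

/-- Favre stress `τ̃_ℓ(v,v) = \overline{(ρ v⊗v)}_ℓ/ρ̄_ℓ − ṽ_ℓ ⊗ ṽ_ℓ`. -/
def favreStress (G : Euc d → ℝ) (ℓ : ℝ) (ρ : Euc d → ℝ) (v : Euc d → Euc d) (x : Euc d) :
    Matrix (Fin d) (Fin d) ℝ :=
  Matrix.of fun i j =>
    (cg G ℓ ρ x)⁻¹ * cg G ℓ (fun y => ρ y * (v y i * v y j)) x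
      - favre G ℓ ρ v x i * favre G ℓ ρ v x j

/-- Deformation work `Π_ℓ = −ρ̄_ℓ ∇ṽ_ℓ : τ̃_ℓ(v,v)`. -/
def deformWork (G : Euc d → ℝ) (ℓ : ℝ) (ρ : Euc d → ℝ) (v : Euc d → Euc d) (x : Euc d) : ℝ :=
  -(cg G ℓ ρ x * frobInner (gradMat (favre G ℓ ρ v) x) (favreStress G ℓ ρ v x))

/-- The periodic box `[0,𝓛]^d`. -/
def box (d : ℕ) (L : ℝ) : Set (Euc d) := {x | ∀ i, x i ∈ Set.Icc (0 : ℝ) L}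

/-- Normalized measure on the periodic box, so that `eLpNorm · p (boxMeasure d 𝓛)`
is the normalized `L^p` norm `(𝓛^{-d}∫_{[0,𝓛]^d}|f|^p)^{1/p}` (ess-sup for `p = ∞`). -/
def boxMeasure (d : ℕ) (L : ℝ) : Measure (Euc d) :=
  (ENNReal.ofReal (L ^ d))⁻¹ • (volume.restrict (box d L))

/-- `𝓛`-periodicity in each coordinate. -/
def PeriodicF {E : Type*} (L : ℝ) (f : Euc d → E) : Prop :=
  ∀ (x : Euc d) (i : Fin d), f (x + EuclideanSpace.single i L) = f x

/-- Quantum stress `Σ = (ħ²/4m²)(Δρ)I − (ħ²/m²)∇√ρ ⊗ ∇√ρ`. -/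
def qStress (hb m : ℝ) (ρ : Euc d → ℝ) (x : Euc d) : Matrix (Fin d) (Fin d) ℝ :=
  Matrix.of fun i j =>
    (hb ^ 2 / (4 * m ^ 2)) * lap ρ x * (if i = j then (1 : ℝ) else 0)
      - (hb ^ 2 / m ^ 2) * (gradient (fun y => Real.sqrt (ρ y)) x i
          * gradient (fun y => Real.sqrt (ρ y)) x j)

/-- Coarse-grained quantum stress `Σ̄_ℓ`. -/
def cgStress (G : Euc d → ℝ) (ℓ hb m : ℝ) (ρ : Euc d → ℝ) (x : Euc d) :
    Matrix (Fin d) (Fin d) ℝ :=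
  Matrix.of fun i j => cg G ℓ (fun z => qStress hb m ρ z i j) x

/-- Row-wise divergence of the coarse-grained quantum stress, `(∇·Σ̄_ℓ)_j = ∑_i ∂_i (Σ̄_ℓ)_{ij}`. -/
def divCgStress (G : Euc d → ℝ) (ℓ hb m : ℝ) (ρ : Euc d → ℝ) (x : Euc d) : Euc d :=
  (EuclideanSpace.equiv (Fin d) ℝ).symm
    (fun j => ∑ i, pd i (fun y => cgStress G ℓ hb m ρ y i j) x)

/-- Quantum baropycnal work `Λ^{(Σ)}_ℓ = −(1/ρ̄_ℓ)(∇·Σ̄_ℓ)·τ̄_ℓ(ρ,v)`. -/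
def qBaroWork (G : Euc d → ℝ) (ℓ hb m : ℝ) (ρ : Euc d → ℝ) (v : Euc d → Euc d) (x : Euc d) : ℝ :=
  -((cg G ℓ ρ x)⁻¹ * ⟪divCgStress G ℓ hb m ρ x, tauV G ℓ ρ v x⟫)

end QT

open ProbabilityTheory

namespace QT

/-! ### Frobenius norm of a covariance matrix -/

section Covariance

variable {Ω : Type*} [MeasurableSpace Ω] {μ : Measure Ω} [IsProbabilityMeasure μ]

/-- Cauchy–Schwarz for covariances. -/
lemma covariance_sq_le {X Y : Ω → ℝ} (hX : MemLp X 2 μ) (hY : MemLp Y 2 μ) :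
    cov[X, Y; μ] ^ 2 ≤ Var[X; μ] * Var[Y; μ] := by
  -- `s ↦ Var[s X + Y]` is a nonnegative quadratic polynomial, so its discriminant is nonpositive.
  have key : ∀ s : ℝ, 0 ≤ Var[X; μ] * (s * s) + (2 * cov[X, Y; μ]) * s + Var[Y; μ] := by
    intro s
    have h := variance_nonneg (s • X + Y) μ
    rw [variance_add (hX.const_smul s) hY, variance_smul, covariance_smul_left] at h
    linarith
  have h := discrim_le_zero key
  rw [discrim] at h
  linarith

/-- The Frobenius norm of a covariance matrix is at most its trace, hence at most the mean square
deviation from any fixed vector. -/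
lemma frobNorm_covariance_le {d : ℕ} {V : Ω → Euc d} (hV : ∀ i, MemLp (fun ω => V ω i) 2 μ)
    (c : Euc d) {D : ℝ} (hD : ∀ᵐ ω ∂μ, ‖V ω - c‖ ≤ D) :
    frobNorm (Matrix.of fun i j => cov[fun ω => V ω i, fun ω => V ω j; μ]) ≤ D ^ 2 := by
  have hsub : ∀ i, MemLp (fun ω => V ω i - c i) 2 μ := fun i => (hV i).sub (memLp_const (c i))
  have htrace : ∑ i, Var[fun ω => V ω i; μ] ≤ D ^ 2 := by
    calc ∑ i, Var[fun ω => V ω i; μ]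
        ≤ ∑ i, ∫ ω, (V ω i - c i) ^ 2 ∂μ := by
          refine Finset.sum_le_sum fun i _ => ?_
          rw [← variance_sub_const (hV i).aestronglyMeasurable (c i)]
          exact variance_le_expectation_sq (hsub i).aestronglyMeasurable
      _ = ∫ ω, ∑ i, (V ω i - c i) ^ 2 ∂μ :=
          (integral_finsetSum _ fun i _ => (hsub i).integrable_sq).symm
      _ ≤ ∫ _, D ^ 2 ∂μ := by
          refine integral_mono_ae (integrable_finsetSum _ fun i _ => (hsub i).integrable_sq)
            (integrable_const _) ?_
          filter_upwards [hD] with ω hω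
          have h : ∑ i, (V ω i - c i) ^ 2 = ‖V ω - c‖ ^ 2 := by
            simp [EuclideanSpace.norm_sq_eq]
          rw [h]
          gcongr
      _ = D ^ 2 := by simp
  refine le_trans ?_ htrace
  refine Real.sqrt_le_iff.2 ⟨Finset.sum_nonneg fun i _ => variance_nonneg _ _, ?_⟩
  rw [sq, Finset.sum_mul_sum]
  exact Finset.sum_le_sum fun i _ => Finset.sum_le_sum fun j _ => covariance_sq_le (hV i) (hV j)

end Covariance

/-! ### Increments -/

section SupIncr

variable {d : ℕ} {E : Type*} [NormedAddCommGroup E]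

lemma supIncr_nonneg (a : Euc d → E) (ℓ : ℝ) (x : Euc d) : 0 ≤ supIncr a ℓ x :=
  Real.iSup_nonneg fun _ => Real.iSup_nonneg fun _ => norm_nonneg _

/-- For a bounded field the supremum defining `δa(ℓ;x)` is a genuine one. -/
lemma norm_incr_le_supIncr {a : Euc d → E} {C : ℝ} (ha : ∀ y, ‖a y‖ ≤ C) {ℓ : ℝ} (x : Euc d)
    {r : Euc d} (hr : r ∈ ball (0 : Euc d) ℓ) : ‖incr a r x‖ ≤ supIncr a ℓ x := by
  have hb : ∀ r, ‖incr a r x‖ ≤ C + C := fun r =>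
    (norm_sub_le _ _).trans (add_le_add (ha _) (ha _))
  have hC : 0 ≤ C + C := (norm_nonneg _).trans (hb 0)
  refine le_ciSup_of_le ⟨C + C, ?_⟩ r ?_
  · rintro _ ⟨s, rfl⟩
    exact Real.iSup_le (fun _ => hb s) hC
  · exact le_ciSup_of_le ⟨C + C, by rintro _ ⟨_, rfl⟩; exact hb r⟩ hr le_rfl

end SupIncr

/-! ### Favre averages as expectations -/

section FavreMeasure

variable {d : ℕ}

/-- The probability measure on increments `r` with density `G_ℓ(r) ρ(x+r) / ρ̄_ℓ(x)`, whose
expectations are the Favre averages at `x`. -/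
def favreMeasure (G : Euc d → ℝ) (ℓ : ℝ) (ρ : Euc d → ℝ) (x : Euc d) : Measure (Euc d) :=
  volume.withDensity fun r => ENNReal.ofReal ((cg G ℓ ρ x)⁻¹ * (resc G ℓ r * ρ (x + r)))

variable {G : Euc d → ℝ} {ℓ : ℝ} {ρ : Euc d → ℝ} {x : Euc d}

lemma resc_nonneg (hG : IsMollifier G) (hℓ : 0 < ℓ) (r : Euc d) : 0 ≤ resc G ℓ r :=
  mul_nonneg (by positivity) (hG.nonneg _)

lemma mem_ball_of_resc_ne_zero (hG : IsMollifier G) (hℓ : 0 < ℓ) {r : Euc d}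
    (hr : resc G ℓ r ≠ 0) : r ∈ ball (0 : Euc d) ℓ := by
  have h := hG.supp (subset_tsupport G (right_ne_zero_of_mul hr))
  rw [mem_ball_zero_iff, norm_smul, norm_inv, Real.norm_of_nonneg hℓ.le,
    inv_mul_lt_iff₀ hℓ, mul_one] at h
  exact mem_ball_zero_iff.2 h

lemma measurable_favreDensity (hG : IsMollifier G) (hρm : Measurable ρ) :
    Measurable fun r => (cg G ℓ ρ x)⁻¹ * (resc G ℓ r * ρ (x + r)) := by
  have hGm : Measurable G := hG.smooth.continuous.measurable
  unfold resc
  fun_prop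

lemma favreDensity_nonneg (hG : IsMollifier G) (hℓ : 0 < ℓ) (hρ0 : ∀ y, 0 ≤ ρ y)
    (hpos : 0 < cg G ℓ ρ x) (r : Euc d) :
    0 ≤ (cg G ℓ ρ x)⁻¹ * (resc G ℓ r * ρ (x + r)) :=
  mul_nonneg (inv_nonneg.2 hpos.le) (mul_nonneg (resc_nonneg hG hℓ r) (hρ0 _))

lemma isProbabilityMeasure_favreMeasure (hG : IsMollifier G) (hℓ : 0 < ℓ)
    (hρ0 : ∀ y, 0 ≤ ρ y) (hpos : 0 < cg G ℓ ρ x) :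
    IsProbabilityMeasure (favreMeasure G ℓ ρ x) := by
  -- Integrability comes for free: the Bochner integral `ρ̄_ℓ(x)` is nonzero.
  have hint : Integrable fun r => resc G ℓ r * ρ (x + r) := .of_integral_ne_zero hpos.ne'
  have hone : ∫ r, (cg G ℓ ρ x)⁻¹ * (resc G ℓ r * ρ (x + r)) = 1 := by
    rw [integral_const_mul]
    exact inv_mul_cancel₀ hpos.ne'
  refine ⟨?_⟩
  rw [favreMeasure, withDensity_apply _ MeasurableSet.univ, Measure.restrict_univ,
    ← ofReal_integral_eq_lintegral_ofReal (hint.const_mul _)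
      (ae_of_all _ (favreDensity_nonneg hG hℓ hρ0 hpos)), hone, ENNReal.ofReal_one]

lemma ae_favreMeasure_mem_ball (hG : IsMollifier G) (hℓ : 0 < ℓ) (hρm : Measurable ρ) :
    ∀ᵐ r ∂favreMeasure G ℓ ρ x, r ∈ ball (0 : Euc d) ℓ := by
  rw [favreMeasure, ae_withDensity_iff (measurable_favreDensity hG hρm).ennreal_ofReal]
  refine ae_of_all _ fun r hr => mem_ball_of_resc_ne_zero hG hℓ fun h => hr ?_
  simp [h]

/-- Expectations under `favreMeasure` are Favre averages. -/
lemma integral_favreMeasure {E : Type*} [NormedAddCommGroup E] [NormedSpace ℝ E]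
    (hG : IsMollifier G) (hℓ : 0 < ℓ) (hρm : Measurable ρ) (hρ0 : ∀ y, 0 ≤ ρ y)
    (hpos : 0 < cg G ℓ ρ x) (f : Euc d → E) :
    ∫ r, f (x + r) ∂favreMeasure G ℓ ρ x
      = (cg G ℓ ρ x)⁻¹ • cg G ℓ (fun y => ρ y • f y) x := by
  rw [favreMeasure, integral_withDensity_eq_integral_toReal_smul
    (measurable_favreDensity hG hρm).ennreal_ofReal (ae_of_all _ fun _ => ENNReal.ofReal_lt_top),
    cg.eq_def G ℓ (fun y => ρ y • f y), ← integral_smul]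
  refine integral_congr_ae (ae_of_all _ fun r => ?_)
  simp only [ENNReal.toReal_ofReal (favreDensity_nonneg hG hℓ hρ0 hpos r), mul_smul]

lemma favreStress_eq_covariance {v : Euc d → Euc d} (hG : IsMollifier G) (hℓ : 0 < ℓ)
    (hρm : Measurable ρ) (hρ0 : ∀ y, 0 ≤ ρ y) (hpos : 0 < cg G ℓ ρ x)
    (hv : ∀ i, MemLp (fun r => v (x + r) i) 2 (favreMeasure G ℓ ρ x)) :
    favreStress G ℓ ρ v x = Matrix.of fun i j =>
      cov[fun r => v (x + r) i, fun r => v (x + r) j; favreMeasure G ℓ ρ x] := by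
  have := isProbabilityMeasure_favreMeasure hG hℓ hρ0 hpos
  have hfav : ∀ i, favre G ℓ ρ v x i = ∫ r, v (x + r) i ∂favreMeasure G ℓ ρ x := by
    intro i
    rw [favre, if_pos hpos, ← integral_favreMeasure hG hℓ hρm hρ0 hpos v,
      eval_integral_piLp fun i => (hv i).integrable one_le_two]
  ext i j
  rw [favreStress, Matrix.of_apply, Matrix.of_apply, covariance_eq_sub (hv i) (hv j), hfav, hfav]
  congr 1
  exact (integral_favreMeasure hG hℓ hρm hρ0 hpos fun y => v y i * v y j).symm

end FavreMeasure

end QT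

open QT in
/-- Favre stress estimate
`|τ̃_ℓ(v,v)(x)| ≤ 6 (δv(ℓ;x))²[1 + Mδρ(ℓ;x) + M²δρ(ℓ;x)²]`. -/
theorem frobNorm_favreStress_le {d : ℕ} (hd : 1 ≤ d)
    (G : Euc d → ℝ) (hG : IsMollifier G)
    (ρ : Euc d → ℝ) (v : Euc d → Euc d) (R Cv : ℝ)
    (hρm : Measurable ρ) (hρ0 : ∀ y, 0 ≤ ρ y) (hρb : ∀ y, ρ y ≤ R)
    (hvm : Measurable v) (hvb : ∀ y, ‖v y‖ ≤ Cv)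
    (x : Euc d) (ℓ M : ℝ) (hℓ : 0 < ℓ) (hM : 0 < M) (hρℓ : 1 / M ≤ cg G ℓ ρ x) :
    frobNorm (favreStress G ℓ ρ v x) ≤
      6 * (supIncr v ℓ x) ^ 2 *
        (1 + M * supIncr ρ ℓ x + M ^ 2 * (supIncr ρ ℓ x) ^ 2) := by
  have hpos : 0 < cg G ℓ ρ x := (one_div_pos.2 hM).trans_le hρℓ
  have := isProbabilityMeasure_favreMeasure hG hℓ hρ0 hpos
  have hv : ∀ i, MemLp (fun r => v (x + r) i) 2 (favreMeasure G ℓ ρ x) := fun i =>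
    .of_bound (by fun_prop : Measurable fun r => v (x + r) i).aestronglyMeasurable Cv
      (ae_of_all _ fun r => (PiLp.norm_apply_le _ i).trans (hvb _))
  have hstress : frobNorm (favreStress G ℓ ρ v x) ≤ supIncr v ℓ x ^ 2 := by
    rw [favreStress_eq_covariance hG hℓ hρm hρ0 hpos hv]
    refine frobNorm_covariance_le hv (v x) ?_
    filter_upwards [ae_favreMeasure_mem_ball hG hℓ hρm] with r hr
    exact norm_incr_le_supIncr hvb x hr
  have hδ : 0 ≤ M * supIncr ρ ℓ x := mul_nonneg hM.le (supIncr_nonneg ρ ℓ x)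
  have hbracket : 1 ≤ 6 * (1 + M * supIncr ρ ℓ x + M ^ 2 * supIncr ρ ℓ x ^ 2) := by
    nlinarith
  calc frobNorm (favreStress G ℓ ρ v x) ≤ supIncr v ℓ x ^ 2 := hstress
    _ ≤ supIncr v ℓ x ^ 2 * (6 * (1 + M * supIncr ρ ℓ x + M ^ 2 * supIncr ρ ℓ x ^ 2)) :=
      le_mul_of_one_le_right (sq_nonneg _) hbracket
    _ = _ := by ring
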